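/- Let x : Fin 11 → ℝ^10 be a regular 11-simplex and let C2 be a clique of order 10 in the graph on Y1. Then the 90-element set Z splits as a disjoint union Z = Z1 ∪ Z2 with |Z1| = |Z2| = 45 such that every two distinct vectors within the same part Zi have inner product in {α1, α2, α3}, while ⟨z1, z2⟩ ∉ {α1, α2, α3} for every z1 ∈ Z1 and every z2 ∈ Z2. -/

import Mathlib

open RealInnerProductSpace

noncomputable section

/-- The three admissible inner product values (angles). -/
def α1 : ℝ := 4/15
def α2 : ℝ := -1/10
def α3 : ℝ := -7/15

/-- A regular 11-simplex in ℝ^10: eleven unit vectors with pairwise inner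
products equal to -1/10. -/
def IsRegularSimplex (x : Fin 11 → EuclideanSpace ℝ (Fin 10)) : Prop :=
  (∀ i, ‖x i‖ = 1) ∧ ∀ i j : Fin 11, i ≠ j → ⟪x i, x j⟫ = -1/10

/-- The set `Y1`: unit vectors `y` with `⟪x 0, y⟫ = α2` such that among the
indices `i ≠ 0`, exactly six satisfy `⟪x i, y⟫ = α1`, exactly one satisfies
`⟪x i, y⟫ = α2`, and exactly three satisfy `⟪x i, y⟫ = α3`. -/
def Y1set (x : Fin 11 → EuclideanSpace ℝ (Fin 10)) : Set (EuclideanSpace ℝ (Fin 10)) :=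
  {y | ‖y‖ = 1 ∧ ⟪x 0, y⟫ = α2 ∧
    {i : Fin 11 | i ≠ 0 ∧ ⟪x i, y⟫ = α1}.ncard = 6 ∧
    {i : Fin 11 | i ≠ 0 ∧ ⟪x i, y⟫ = α2}.ncard = 1 ∧
    {i : Fin 11 | i ≠ 0 ∧ ⟪x i, y⟫ = α3}.ncard = 3}

/-- A clique of order 10 in the graph on `Y1` in which two distinct vectors are
adjacent iff their inner product equals `α2`. -/
def IsClique10 (x : Fin 11 → EuclideanSpace ℝ (Fin 10))
    (D : Set (EuclideanSpace ℝ (Fin 10))) : Prop :=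
  D ⊆ Y1set x ∧ D.ncard = 10 ∧
    ∀ y ∈ D, ∀ y' ∈ D, y ≠ y' → ⟪y, y'⟫ = α2

/-- The set `Y`: unit vectors `u ∉ C2` whose inner products with
`x 0, …, x 10` take the value `α1` exactly six times, `α2` exactly twice, and
`α3` exactly three times. -/
def Yset (x : Fin 11 → EuclideanSpace ℝ (Fin 10))
    (C2 : Set (EuclideanSpace ℝ (Fin 10))) : Set (EuclideanSpace ℝ (Fin 10)) :=
  {u | ‖u‖ = 1 ∧ u ∉ C2 ∧
    {i : Fin 11 | ⟪x i, u⟫ = α1}.ncard = 6 ∧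
    {i : Fin 11 | ⟪x i, u⟫ = α2}.ncard = 2 ∧
    {i : Fin 11 | ⟪x i, u⟫ = α3}.ncard = 3}

/-- The set `Z`: vectors of `Y` whose inner products with all vectors of `C2`
lie in `{α1, α2, α3}`. -/
def Zset (x : Fin 11 → EuclideanSpace ℝ (Fin 10))
    (C2 : Set (EuclideanSpace ℝ (Fin 10))) : Set (EuclideanSpace ℝ (Fin 10)) :=
  {u ∈ Yset x C2 | ∀ w ∈ C2, ⟪u, w⟫ ∈ ({α1, α2, α3} : Set ℝ)}

/-!
A vector making six angles `α1`, two `α2` and three `α3` with the vertices of the simplex is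
determined by the word in `{1, 0, -1}` recording these angles, and inner products of such vectors
are affine functions of the dot products of their words: `α1`, `α2`, `α3` correspond to `3`, `0`,
`-3`. The words of a clique of order 10 start with `0`, and without this letter they are, up to
order, the rows of a conference matrix of order 10 with constant row sum 3. Counting shows that such
a matrix is symmetric and that its entries `-1` form a strongly regular graph with parameters
`(10, 3, 0, 1)`, which is the Petersen graph. So after renumbering the vertices of the simplex there
is a single clique to consider, and `Z` consists of 90 explicit vectors.

Why there are two classes: modulo 3 the words of the clique span a totally isotropic space `S` of
dimension 4. The words of `Z` are isotropic modulo 3 and orthogonal to `S` and to the all-ones word,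
hence project to the two isotropic lines of a hyperbolic plane. The dot product of two words of `Z`
is divisible by 3 exactly when they project to the same line.
-/

open scoped Finset

section Equiangular

variable {ι E : Type*} [DecidableEq ι] [NormedAddCommGroup E] [InnerProductSpace ℝ E]
  {x : ι → E} {a b : ℝ}

theorem inner_vertex_sum_smul_of_equiangular [Fintype ι]
    (hx : ∀ i j, ⟪x i, x j⟫ = if i = j then a else b) (j : ι) (c : ι → ℝ) :
    ⟪x j, ∑ i, c i • x i⟫ = (a - b) * c j + b * ∑ i, c i := by
  have hterm (i : ι) : c i * ⟪x j, x i⟫ = (if j = i then (a - b) * c i else 0) + b * c i := by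
    rw [hx]
    split_ifs <;> ring
  simp only [inner_sum, real_inner_smul_right, hterm, Finset.sum_add_distrib, Finset.sum_ite_eq,
    Finset.mem_univ, if_true, Finset.mul_sum]

theorem inner_sum_smul_of_equiangular [Fintype ι]
    (hx : ∀ i j, ⟪x i, x j⟫ = if i = j then a else b) (c d : ι → ℝ) :
    ⟪∑ i, c i • x i, ∑ i, d i • x i⟫ =
      (a - b) * ∑ i, c i * d i + b * ((∑ i, c i) * ∑ i, d i) := by
  simp only [sum_inner, real_inner_smul_left, inner_vertex_sum_smul_of_equiangular hx, mul_add,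
    Finset.sum_add_distrib, mul_left_comm (c _), ← Finset.mul_sum, ← Finset.sum_mul]

theorem affineIndependent_of_equiangular [Finite ι] (hab : a ≠ b)
    (hx : ∀ i j, ⟪x i, x j⟫ = if i = j then a else b) : AffineIndependent ℝ x := by
  cases nonempty_fintype ι
  rw [affineIndependent_iff_of_fintype]
  intro c hc hcx i
  rw [Finset.univ.weightedVSub_eq_linear_combination hc] at hcx
  have h := inner_sum_smul_of_equiangular hx c c
  rw [hcx, inner_zero_left, hc, zero_mul, mul_zero, add_zero, zero_eq_mul,
    or_iff_right (sub_ne_zero.2 hab), Finset.sum_eq_zero_iff_of_nonneg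
    fun i _ => mul_self_nonneg (c i)] at h
  exact mul_self_eq_zero.1 (h i (Finset.mem_univ i))

theorem ext_inner_of_equiangular [Fintype ι] [FiniteDimensional ℝ E] (hab : a ≠ b)
    (hx : ∀ i j, ⟪x i, x j⟫ = if i = j then a else b)
    (hcard : Fintype.card ι = Module.finrank ℝ E + 1) {u v : E}
    (huv : ∀ i, ⟪x i, u⟫ = ⟪x i, v⟫) : u = v := by
  have haff : affineSpan ℝ (Set.range x) = ⊤ :=
    (affineIndependent_of_equiangular hab hx).affineSpan_eq_top_iff_card_eq_finrank_add_one.2 hcard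
  have hspan : Submodule.span ℝ (Set.range x) = ⊤ :=
    top_unique fun w _ => affineSpan_le_toAffineSubspace_span (haff ▸ AffineSubspace.mem_top ℝ E w)
  have hinner : (innerₗ E).flip u = (innerₗ E).flip v := LinearMap.ext_on_range hspan huv
  exact ext_inner_left ℝ fun w => LinearMap.congr_fun hinner w

end Equiangular

section SignWord

variable {ι : Type*} [Fintype ι]

/-- `HasProfile v p z m` says that the word `v` of signs has `p` letters `1`, `z` letters `0` and
`m` letters `-1`. -/
def HasProfile (v : ι → SignType) (p z m : ℕ) : Prop :=
  #{i | v i = 1} = p ∧ #{i | v i = 0} = z ∧ #{i | v i = -1} = m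

/-- The standard inner product of two words of signs. -/
def signDot (v w : ι → SignType) : ℤ :=
  ∑ i, (v i : ℤ) * w i

theorem HasProfile.sum_comp {M : Type*} [AddCommMonoid M] {v : ι → SignType} {p z m : ℕ}
    (hv : HasProfile v p z m) (f : SignType → M) :
    ∑ i, f (v i) = p • f 1 + z • f 0 + m • f (-1) := by
  obtain ⟨rfl, rfl, rfl⟩ := hv
  have hfiber (s : SignType) : ∑ i with v i = s, f (v i) = #{i | v i = s} • f s :=
    Finset.sum_eq_card_nsmul fun i hi => congrArg f (Finset.mem_filter.1 hi).2
  rw [← Finset.sum_fiberwise Finset.univ v, SignType.univ_eq]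
  simp [hfiber, add_assoc, add_comm]

theorem HasProfile.comp_equiv {κ : Type*} [Fintype κ] {v : ι → SignType} {p z m : ℕ}
    (hv : HasProfile v p z m) (e : κ ≃ ι) : HasProfile (v ∘ e) p z m := by
  have hcard (s : SignType) : #{k | v (e k) = s} = #{i | v i = s} :=
    Finset.card_equiv e (by simp)
  simpa only [HasProfile, Function.comp_apply, hcard] using hv

theorem HasProfile.sum_eq {v : ι → SignType} {p z m : ℕ} (hv : HasProfile v p z m) :
    ∑ i, (v i : ℤ) = p - m := by
  rw [hv.sum_comp (fun s => (s : ℤ))]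
  simp [sub_eq_add_neg]

theorem HasProfile.signDot_self {v : ι → SignType} {p z m : ℕ} (hv : HasProfile v p z m) :
    signDot v v = p + m := by
  rw [signDot, hv.sum_comp (fun s => (s : ℤ) * s)]
  simp

end SignWord

namespace IsRegularSimplex

variable {x : Fin 11 → EuclideanSpace ℝ (Fin 10)}

theorem inner_eq (hx : IsRegularSimplex x) (i j : Fin 11) :
    ⟪x i, x j⟫ = if i = j then 1 else -1 / 10 := by
  split_ifs with hij
  · rw [hij, real_inner_self_eq_norm_sq, hx.1, one_pow]
  · exact hx.2 i j hij

theorem comp_perm (hx : IsRegularSimplex x) (σ : Equiv.Perm (Fin 11)) :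
    IsRegularSimplex (x ∘ σ) :=
  ⟨fun i => hx.1 (σ i), fun _ _ hij => hx.2 _ _ (σ.injective.ne hij)⟩

theorem ext_inner (hx : IsRegularSimplex x) {u v : EuclideanSpace ℝ (Fin 10)}
    (huv : ∀ i, ⟪x i, u⟫ = ⟪x i, v⟫) : u = v :=
  ext_inner_of_equiangular (by norm_num) hx.inner_eq (by simp) huv

end IsRegularSimplex

/-- The admissible angle encoded by a sign: `1`, `0`, `-1` stand for `α1`, `α2`, `α3`. -/
def angle (s : SignType) : ℝ :=
  (11 * (s : ℝ) - 3) / 30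

theorem angle_one : angle 1 = α1 := by norm_num [angle, α1]

theorem angle_zero : angle 0 = α2 := by norm_num [angle, α2]

theorem angle_neg_one : angle (-1) = α3 := by norm_num [angle, α3]

theorem angle_injective : Function.Injective angle := by
  intro s t h
  have hst : (s : ℝ) = t := by
    unfold angle at h
    linarith
  revert hst
  cases s <;> cases t <;> norm_num

/-- The vector encoded by the word `v` relative to the simplex `x`; for words of profile `(6, 2, 3)`
it is the unit vector making the angle `angle (v i)` with each vertex `x i`. -/
def signVec (x : Fin 11 → EuclideanSpace ℝ (Fin 10)) (v : Fin 11 → SignType) :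
    EuclideanSpace ℝ (Fin 10) :=
  (1 / 3 : ℝ) • ∑ i, (v i : ℝ) • x i

section SignVec

variable {x : Fin 11 → EuclideanSpace ℝ (Fin 10)} {v w : Fin 11 → SignType}

theorem signVec_comp_perm (σ : Equiv.Perm (Fin 11)) : signVec (x ∘ σ) (v ∘ σ) = signVec x v :=
  congrArg _ (Equiv.sum_comp σ fun i => (v i : ℝ) • x i)

theorem HasProfile.sum_cast_eq_three (hv : HasProfile v 6 2 3) : ∑ i, (v i : ℝ) = 3 := by
  rw [hv.sum_comp (fun s => (s : ℝ))]
  norm_num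

theorem inner_vertex_signVec (hx : IsRegularSimplex x) (hv : HasProfile v 6 2 3) (i : Fin 11) :
    ⟪x i, signVec x v⟫ = angle (v i) := by
  rw [signVec, real_inner_smul_right, inner_vertex_sum_smul_of_equiangular hx.inner_eq,
    hv.sum_cast_eq_three, angle]
  ring

theorem inner_signVec (hx : IsRegularSimplex x) (hv : HasProfile v 6 2 3)
    (hw : HasProfile w 6 2 3) : ⟪signVec x v, signVec x w⟫ = (11 * signDot v w - 9) / 90 := by
  have hdot : ∑ i, (v i : ℝ) * w i = signDot v w := by simp [signDot]
  rw [signVec, signVec, real_inner_smul_left, real_inner_smul_right,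
    inner_sum_smul_of_equiangular hx.inner_eq, hv.sum_cast_eq_three, hw.sum_cast_eq_three, hdot]
  ring

theorem norm_signVec (hx : IsRegularSimplex x) (hv : HasProfile v 6 2 3) : ‖signVec x v‖ = 1 := by
  rw [norm_eq_sqrt_real_inner, inner_signVec hx hv hv, hv.signDot_self]
  norm_num

theorem signVec_injOn (hx : IsRegularSimplex x) :
    Set.InjOn (signVec x) {v | HasProfile v 6 2 3} := fun v hv w hw hvw =>
  funext fun i => angle_injective <| by
    rw [← inner_vertex_signVec hx hv, hvw, inner_vertex_signVec hx hw]

theorem inner_signVec_eq_iff (hx : IsRegularSimplex x) (hv : HasProfile v 6 2 3)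
    (hw : HasProfile w 6 2 3) {n : ℤ} {t : ℝ} (ht : (11 * (n : ℝ) - 9) / 90 = t) :
    ⟪signVec x v, signVec x w⟫ = t ↔ signDot v w = n := by
  rw [inner_signVec hx hv hw, ← ht, ← Int.cast_inj (α := ℝ)]
  constructor <;> intro h <;> linarith

/-- The values of `signDot` that correspond to the inner products `α2`, `α1`, `α3` of the encoded
vectors. -/
def admissibleDots : Finset ℤ := {0, 3, -3}

theorem inner_signVec_mem_angles_iff (hx : IsRegularSimplex x) (hv : HasProfile v 6 2 3)
    (hw : HasProfile w 6 2 3) : ⟪signVec x v, signVec x w⟫ ∈ ({α1, α2, α3} : Set ℝ) ↔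
      signDot v w ∈ admissibleDots := by
  simp only [admissibleDots, Set.mem_insert_iff, Set.mem_singleton_iff, Finset.mem_insert,
    Finset.mem_singleton, inner_signVec_eq_iff hx hv hw (n := 3) (t := α1) (by norm_num [α1]),
    inner_signVec_eq_iff hx hv hw (n := 0) (t := α2) (by norm_num [α2]),
    inner_signVec_eq_iff hx hv hw (n := -3) (t := α3) (by norm_num [α3]), or_left_comm]

end SignVec

theorem exists_eq_of_sum_ncard_eq_card {ι κ β : Type*} [Finite ι] [Fintype κ] {f : ι → β}
    {g : κ → β} (hg : Function.Injective g) (h : ∑ k, {i | f i = g k}.ncard = Nat.card ι) (i : ι) :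
    ∃ k, f i = g k := by
  have hdisjoint : Pairwise (Function.onFun Disjoint fun k => {i | f i = g k}) := fun k l hkl =>
    Set.disjoint_left.2 fun i hk hl => hkl (hg (hk.symm.trans hl))
  have huniv : ⋃ k, {i | f i = g k} = Set.univ := by
    rw [Set.eq_univ_iff_ncard, Set.ncard_iUnion_of_finite (fun _ => Set.toFinite _) hdisjoint,
      finsum_eq_sum_of_fintype, h]
  exact Set.mem_iUnion.1 (huniv ▸ Set.mem_univ i)

section Encoding

variable {x : Fin 11 → EuclideanSpace ℝ (Fin 10)} {u : EuclideanSpace ℝ (Fin 10)}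

theorem exists_signVec_eq_iff (hx : IsRegularSimplex x) :
    (∃ v, HasProfile v 6 2 3 ∧ signVec x v = u) ↔
      {i | ⟪x i, u⟫ = α1}.ncard = 6 ∧ {i | ⟪x i, u⟫ = α2}.ncard = 2 ∧
        {i | ⟪x i, u⟫ = α3}.ncard = 3 := by
  rw [← angle_one, ← angle_zero, ← angle_neg_one]
  have hletters {v : Fin 11 → SignType} (hv : ∀ i, ⟪x i, u⟫ = angle (v i)) (s : SignType) :
      {i | ⟪x i, u⟫ = angle s}.ncard = #{i | v i = s} := by
    simp only [hv, angle_injective.eq_iff, ← Finset.coe_filter_univ, Set.ncard_coe_finset]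
  constructor
  · rintro ⟨v, hv, rfl⟩
    simpa only [hletters (inner_vertex_signVec hx hv)]
  · intro hu
    have hword : ∀ i, ∃ s, ⟪x i, u⟫ = angle s :=
      exists_eq_of_sum_ncard_eq_card angle_injective (by simp [SignType.univ_eq, hu])
    choose v hv using hword
    rw [hletters hv, hletters hv, hletters hv] at hu
    exact ⟨v, hu, hx.ext_inner fun i => (inner_vertex_signVec hx hu i).trans (hv i).symm⟩

theorem exists_signVec_eq_of_mem_Y1set (hx : IsRegularSimplex x) (hu : u ∈ Y1set x) :
    ∃ v, HasProfile v 6 2 3 ∧ v 0 = 0 ∧ signVec x v = u := by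
  obtain ⟨-, h0, h1, h2, h3⟩ := hu
  have hsdiff (t : ℝ) : {i | i ≠ 0 ∧ ⟪x i, u⟫ = t} = {i | ⟪x i, u⟫ = t} \ {0} := by
    ext i
    exact and_comm
  have hne (t : ℝ) (ht : α2 ≠ t) : {i | i ≠ 0 ∧ ⟪x i, u⟫ = t} = {i | ⟪x i, u⟫ = t} := by
    rw [hsdiff, Set.sdiff_singleton_eq_self]
    exact fun h => ht (h0.symm.trans h)
  rw [hne α1 (by norm_num [α1, α2])] at h1
  rw [hne α3 (by norm_num [α3, α2])] at h3
  rw [hsdiff, Set.ncard_sdiff_singleton_of_mem (show 0 ∈ {i | ⟪x i, u⟫ = α2} from h0)] at h2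
  obtain ⟨v, hv, rfl⟩ := (exists_signVec_eq_iff hx).2 ⟨h1, by omega, h3⟩
  exact ⟨v, hv, angle_injective (by rw [← inner_vertex_signVec hx hv, h0, angle_zero]), rfl⟩

theorem Zset_comp_perm (σ : Equiv.Perm (Fin 11)) (C : Set (EuclideanSpace ℝ (Fin 10))) :
    Zset (x ∘ σ) C = Zset x C := by
  have hncard (u : EuclideanSpace ℝ (Fin 10)) (t : ℝ) :
      {i | ⟪x (σ i), u⟫ = t}.ncard = {i | ⟪x i, u⟫ = t}.ncard :=
    Set.ncard_preimage_of_injective_subset_range (s := {i | ⟪x i, u⟫ = t}) σ.injective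
      (by simp [σ.surjective.range_eq])
  simp only [Zset, Yset, Function.comp_apply, hncard]

theorem Zset_range_signVec {κ : Type*} (hx : IsRegularSimplex x) {r : κ → Fin 11 → SignType}
    (hr : ∀ k, HasProfile (r k) 6 2 3) :
    Zset x (Set.range fun k => signVec x (r k)) = signVec x ''
      {v | HasProfile v 6 2 3 ∧ ∀ k, signDot v (r k) ∈ admissibleDots} := by
  ext u
  simp only [Zset, Yset, ← exists_signVec_eq_iff hx, Set.forall_mem_range, Set.mem_image,
    Set.mem_ofPred_eq]
  constructor
  · rintro ⟨⟨-, -, v, hv, rfl⟩, hdot⟩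
    exact ⟨v, ⟨hv, fun k => (inner_signVec_mem_angles_iff hx hv (hr k)).1 (hdot k)⟩, rfl⟩
  · rintro ⟨v, ⟨hv, hdot⟩, rfl⟩
    refine ⟨⟨norm_signVec hx hv, ?_, v, hv, rfl⟩,
      fun k => (inner_signVec_mem_angles_iff hx hv (hr k)).2 (hdot k)⟩
    rintro ⟨k, hk⟩
    have hself := hdot k
    rw [signVec_injOn hx (hr k) hv hk, hv.signDot_self] at hself
    norm_num [admissibleDots] at hself

end Encoding

section ConferenceMatrix

variable {ι : Type*} [Fintype ι] {C : Matrix ι ι ℤ}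

/-- A conference matrix: a square matrix with zero diagonal and all other entries `±1`, whose
distinct rows are orthogonal. -/
structure IsConferenceMatrix (C : Matrix ι ι ℤ) : Prop where
  apply_self (i : ι) : C i i = 0
  isUnit_apply {i j : ι} (hij : i ≠ j) : IsUnit (C i j)
  sum_mul_eq_zero {i j : ι} (hij : i ≠ j) : ∑ k, C i k * C j k = 0

theorem exists_perm_isConferenceMatrix {W : Matrix ι ι ℤ} (hcard : Even (Fintype.card ι))
    (hzero : ∀ i, ∃ j, ∀ k, W i k = 0 ↔ k = j) (hunit : ∀ i j, W i j ≠ 0 → IsUnit (W i j))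
    (horth : Pairwise fun i j => ∑ k, W i k * W j k = 0) :
    ∃ e : Equiv.Perm ι, IsConferenceMatrix (W.submatrix e id) := by
  classical
  choose z hz using hzero
  have hodd (i j : ι) : (W i j : ZMod 2) = if j = z i then 0 else 1 := by
    split_ifs with h
    · rw [(hz i j).2 h, Int.cast_zero]
    · rcases Int.isUnit_iff.1 (hunit i j (mt (hz i j).1 h)) with h | h <;> rw [h] <;> decide
  have hinj : Function.Injective z := by
    intro i j hij
    by_contra hne
    have hone : (Fintype.card ι : ZMod 2) = 1 := calc
      _ = ∑ k, ((W i k * W j k : ℤ) + if k = z j then 1 else 0 : ZMod 2) := by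
        have hterm (k : ι) : ((W i k * W j k : ℤ) + if k = z j then 1 else 0 : ZMod 2) = 1 := by
          rw [Int.cast_mul, hodd, hodd, hij]
          split_ifs <;> simp
        simp only [hterm, Finset.sum_const, Finset.card_univ, nsmul_one]
      _ = 1 := by
        rw [Finset.sum_add_distrib, ← Int.cast_sum, horth hne]
        simp
    exact zero_ne_one ((ZMod.natCast_eq_zero_iff_even.2 hcard).symm.trans hone)
  let e := Equiv.ofBijective z hinj.bijective_of_finite
  have hzero_iff (i j : ι) : W (e.symm i) j = 0 ↔ j = i :=
    (hz _ j).trans (by rw [show z (e.symm i) = i from e.apply_symm_apply i])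
  exact ⟨e.symm, fun i => (hzero_iff i i).2 rfl,
    fun {i j} hij => hunit _ _ (mt (hzero_iff i j).1 hij.symm),
    fun hij => horth (e.symm.injective.ne hij)⟩

theorem IsConferenceMatrix.four_mul_card_add (hC : IsConferenceMatrix C) {s : ℤ}
    (hs : ∀ i, ∑ k, C i k = s) {i j : ι} (hij : i ≠ j) :
    4 * (#{k | C i k = -1 ∧ C j k = -1} : ℤ) + (1 - C i j) + (1 - C j i) =
      Fintype.card ι - 2 * s := by
  classical
  have hterm (k : ι) : (1 - C i k) * (1 - C j k) =
      (if C i k = -1 ∧ C j k = -1 then 4 else 0) + (if k = j then 1 - C i j else 0) +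
        (if k = i then 1 - C j i else 0) := by
    rcases eq_or_ne k i with rfl | hki
    · simp [hC.apply_self, hij]
    rcases eq_or_ne k j with rfl | hkj
    · simp [hC.apply_self, hij.symm]
    rcases Int.isUnit_iff.1 (hC.isUnit_apply hki.symm) with hi | hi <;>
      rcases Int.isUnit_iff.1 (hC.isUnit_apply hkj.symm) with hj | hj <;>
      simp [hi, hj, hki, hkj]
  calc _ = ∑ k, (1 - C i k) * (1 - C j k) := by
        simp [hterm, Finset.sum_add_distrib, Finset.sum_ite, mul_comm]
    _ = ∑ k, (1 - C i k - C j k + C i k * C j k) :=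
        Finset.sum_congr rfl fun k _ => by ring
    _ = _ := by
        rw [Finset.sum_add_distrib, Finset.sum_sub_distrib, Finset.sum_sub_distrib, hs, hs,
          hC.sum_mul_eq_zero hij, Finset.sum_const, Finset.card_univ, nsmul_one]
        ring

theorem IsConferenceMatrix.apply_comm (hC : IsConferenceMatrix C) {s : ℤ}
    (hs : ∀ i, ∑ k, C i k = s) (hdvd : 4 ∣ Fintype.card ι - 2 * s) (i j : ι) : C i j = C j i := by
  rcases eq_or_ne i j with rfl | hij
  · rfl
  have hcount := hC.four_mul_card_add hs hij
  rcases Int.isUnit_iff.1 (hC.isUnit_apply hij) with h | h <;>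
    rcases Int.isUnit_iff.1 (hC.isUnit_apply hij.symm) with h' | h' <;> omega

theorem IsConferenceMatrix.two_mul_card_add_one (hC : IsConferenceMatrix C) (i : ι) :
    2 * (#{k | C i k = -1} : ℤ) + 1 = Fintype.card ι - ∑ k, C i k := by
  classical
  have hterm (k : ι) : 1 - C i k = (if C i k = -1 then 2 else 0) + if k = i then 1 else 0 := by
    rcases eq_or_ne k i with rfl | hki
    · simp [hC.apply_self]
    rcases Int.isUnit_iff.1 (hC.isUnit_apply hki.symm) with h | h <;> simp [h, hki]
  calc _ = ∑ k, (1 - C i k) := by simp [hterm, Finset.sum_add_distrib, Finset.sum_ite, mul_comm]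
    _ = _ := by simp [Finset.sum_sub_distrib]

/-- The graph joining the indices of the entries `-1` of a symmetric matrix. -/
def negGraph (C : Matrix ι ι ℤ) : SimpleGraph ι :=
  SimpleGraph.fromRel fun i j => C i j = -1

theorem IsConferenceMatrix.negGraph_adj (hC : IsConferenceMatrix C)
    (hsymm : ∀ i j, C i j = C j i) (i j : ι) : (negGraph C).Adj i j ↔ C i j = -1 := by
  rw [negGraph, SimpleGraph.fromRel_adj, hsymm j i, or_self, and_iff_right_iff_imp]
  rintro h rfl
  simp [hC.apply_self] at h

variable [DecidableEq ι]

instance (C : Matrix ι ι ℤ) : DecidableRel (negGraph C).Adj :=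
  fun i j => inferInstanceAs (Decidable (i ≠ j ∧ (C i j = -1 ∨ C j i = -1)))

namespace IsConferenceMatrix

theorem apply_eq_ite (hC : IsConferenceMatrix C) (hsymm : ∀ i j, C i j = C j i) (i j : ι) :
    C i j = if i = j then 0 else if (negGraph C).Adj i j then -1 else 1 := by
  split_ifs with hij hneg
  · rw [hij, hC.apply_self]
  · exact (hC.negGraph_adj hsymm i j).1 hneg
  · exact (Int.isUnit_iff.1 (hC.isUnit_apply hij)).resolve_right
      (mt (hC.negGraph_adj hsymm i j).2 hneg)

theorem isSRGWith_negGraph (hC : IsConferenceMatrix C) {s : ℤ} (hs : ∀ i, ∑ k, C i k = s)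
    {k l : ℕ} (hk : s + 2 * k + 1 = Fintype.card ι) (hl : Fintype.card ι = 2 * s + 4 * (l + 1)) :
    (negGraph C).IsSRGWith (Fintype.card ι) k l (l + 1) := by
  have hadj := hC.negGraph_adj (hC.apply_comm hs ⟨l + 1, by omega⟩)
  have hcommon (i j : ι) : Fintype.card ((negGraph C).commonNeighbors i j) =
      #{k | C i k = -1 ∧ C j k = -1} := by
    rw [← Set.toFinset_card]
    congr 1
    ext k
    simp [SimpleGraph.mem_commonNeighbors, hadj]
  refine ⟨rfl, fun i => ?_, fun i j hij => ?_, fun i j hne hij => ?_⟩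
  · have hcount := hC.two_mul_card_add_one i
    rw [← SimpleGraph.card_neighborFinset_eq_degree, SimpleGraph.neighborFinset_eq_filter]
    simp only [hadj]
    rw [hs] at hcount
    omega
  · have hcount := hC.four_mul_card_add hs hij.ne
    rw [hcommon]
    rw [(hadj i j).1 hij, (hadj j i).1 hij.symm] at hcount
    omega
  · have hcount := hC.four_mul_card_add hs hne
    have hone {i j : ι} (hne : i ≠ j) (hij : ¬(negGraph C).Adj i j) : C i j = 1 :=
      (Int.isUnit_iff.1 (hC.isUnit_apply hne)).resolve_right (mt (hadj i j).2 hij)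
    rw [hcommon]
    rw [hone hne hij, hone hne.symm (mt SimpleGraph.Adj.symm hij)] at hcount
    omega

end IsConferenceMatrix

end ConferenceMatrix

section MooreGraph

theorem pentagon_adj_sub_one {V : Type*} {G : SimpleGraph V} {p : Fin 5 → V}
    (hp : ∀ i, G.Adj (p i) (p (i + 1))) (i : Fin 5) :
    G.Adj (p i) (p (i - 1)) := by
  simpa only [sub_add_cancel] using (hp (i - 1)).symm

variable {V : Type*} [Fintype V] {G : SimpleGraph V} [DecidableRel G.Adj]
  {n k m : ℕ} {u v w z : V}

theorem not_adj_of_isSRGWith_zero (hG : G.IsSRGWith n k 0 m) (huv : G.Adj u v)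
    (hvw : G.Adj v w) : ¬G.Adj u w := fun huw =>
  have hempty : IsEmpty (G.commonNeighbors u w) := Fintype.card_eq_zero_iff.1 (hG.of_adj u w huw)
  hempty.false ⟨v, huv, hvw.symm⟩

theorem eq_of_isSRGWith_zero_one (hG : G.IsSRGWith n k 0 1) (hne : u ≠ w) (huv : G.Adj u v)
    (hvw : G.Adj v w) (huz : G.Adj u z) (hzw : G.Adj z w) : v = z :=
  have hcard := (hG.of_not_adj hne (not_adj_of_isSRGWith_zero hG huv hvw)).le
  congrArg Subtype.val <| Fintype.card_le_one_iff.1 hcard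
    (⟨v, huv, hvw.symm⟩ : G.commonNeighbors u w) ⟨z, huz, hzw.symm⟩

theorem exists_adj_adj_of_isSRGWith_one {l : ℕ} (hG : G.IsSRGWith n k l 1) (hne : u ≠ w)
    (huw : ¬G.Adj u w) : ∃ v, G.Adj u v ∧ G.Adj v w := by
  obtain ⟨⟨v, huv, hwv⟩⟩ := Fintype.card_pos_iff.1 ((hG.of_not_adj hne huw).symm ▸ one_pos)
  exact ⟨v, huv, hwv.symm⟩

theorem exists_adj_notMem_of_isRegularOfDegree (hG : G.IsRegularOfDegree k) (v : V)
    {s : Finset V} (hs : #s < k) : ∃ w, G.Adj v w ∧ w ∉ s := by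
  obtain ⟨w, hw, hws⟩ := Finset.exists_mem_notMem_of_card_lt_card (hs.trans_eq (hG v).symm)
  exact ⟨w, (G.mem_neighborFinset v w).1 hw, hws⟩

theorem adj_iff_of_injective_of_isRegularOfDegree {W : Type*} [Fintype W] {H : SimpleGraph W}
    [DecidableRel H.Adj] (hH : H.IsRegularOfDegree k) (hG : G.IsRegularOfDegree k) {f : W → V}
    (hf : Function.Injective f) (hadj : ∀ a b, H.Adj a b → G.Adj (f a) (f b)) (a b : W) :
    G.Adj (f a) (f b) ↔ H.Adj a b := by
  classical
  refine ⟨fun h => ?_, hadj a b⟩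
  have himage : (H.neighborFinset a).image f = G.neighborFinset (f a) := by
    refine Finset.eq_of_subset_of_card_le ?_ ?_
    · simpa [Finset.image_subset_iff] using hadj a
    · simp [Finset.card_image_of_injective _ hf, hH a, hG (f a)]
  simpa [hf.eq_iff] using himage.ge ((G.mem_neighborFinset _ _).2 h)

theorem exists_pentagon (hG : G.IsSRGWith n k 0 1) (hn : 0 < n) (hk : 1 < k) :
    ∃ p : Fin 5 → V, ∀ i, G.Adj (p i) (p (i + 1)) := by
  obtain ⟨a⟩ : Nonempty V := Fintype.card_pos_iff.1 (hG.card ▸ hn)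
  have hnext := fun v z : V => exists_adj_notMem_of_isRegularOfDegree hG.regular v (s := {z}) hk
  simp only [Finset.mem_singleton] at hnext
  obtain ⟨b, hab, -⟩ := hnext a a
  obtain ⟨c, hbc, hca⟩ := hnext b a
  obtain ⟨d, hcd, hdb⟩ := hnext c b
  have hne : d ≠ a := by
    rintro rfl
    exact not_adj_of_isSRGWith_zero hG hbc hcd hab.symm
  have hda : ¬G.Adj d a := fun hda =>
    hdb (eq_of_isSRGWith_zero_one hG hca hcd hda hbc.symm hab.symm)
  obtain ⟨e, hde, hea⟩ := exists_adj_adj_of_isSRGWith_one hG hne hda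
  exact ⟨![a, b, c, d, e], by simp [Fin.forall_fin_succ, hab, hbc, hcd, hde, hea]⟩

section Pentagon

variable {p q : Fin 5 → V}

theorem pentagon_adj_iff (hG : G.IsSRGWith n k 0 m) (hp : ∀ i, G.Adj (p i) (p (i + 1)))
    (i j : Fin 5) : G.Adj (p i) (p j) ↔ j = i + 1 ∨ j = i - 1 := by
  have hp' := pentagon_adj_sub_one hp
  constructor
  · intro hij
    obtain rfl | h | rfl | rfl :
        j = i ∨ (j = i + 1 ∨ j = i - 1) ∨ j = i + 1 + 1 ∨ j = i - 1 - 1 := by omega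
    · exact (G.irrefl hij).elim
    · exact h
    · exact (not_adj_of_isSRGWith_zero hG (hp i) (hp _) hij).elim
    · exact (not_adj_of_isSRGWith_zero hG (hp' i) (hp' _) hij).elim
  · rintro (rfl | rfl)
    exacts [hp i, hp' i]

theorem pentagon_injective (hG : G.IsSRGWith n k 0 m) (hp : ∀ i, G.Adj (p i) (p (i + 1))) :
    Function.Injective p := by
  intro i j hij
  have hnext := hp i
  have hprev := pentagon_adj_sub_one hp i
  rw [hij, pentagon_adj_iff hG hp] at hnext hprev
  omega

/-- A pentagon `p` of `G` together with, for each of its vertices `p i`, a neighbour `q i` of `p i`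
off the pentagon. -/
structure IsSpokedPentagon (G : SimpleGraph V) (p q : Fin 5 → V) : Prop where
  adj_add_one (i : Fin 5) : G.Adj (p i) (p (i + 1))
  adj_spoke (i : Fin 5) : G.Adj (p i) (q i)
  spoke_ne_add_one (i : Fin 5) : q i ≠ p (i + 1)
  spoke_ne_sub_one (i : Fin 5) : q i ≠ p (i - 1)

theorem exists_isSpokedPentagon (hG : G.IsSRGWith n k 0 1) (hn : 0 < n) (hk : 2 < k) :
    ∃ p q, IsSpokedPentagon G p q := by
  classical
  obtain ⟨p, hp⟩ := exists_pentagon hG hn (one_lt_two.trans hk)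
  choose q hpq hq using fun i => exists_adj_notMem_of_isRegularOfDegree hG.regular (p i)
    (s := {p (i + 1), p (i - 1)}) (Finset.card_le_two.trans_lt hk)
  simp only [Finset.mem_insert, Finset.mem_singleton, not_or] at hq
  exact ⟨p, q, hp, hpq, fun i => (hq i).1, fun i => (hq i).2⟩

namespace IsSpokedPentagon

theorem spoke_adj_iff (h : IsSpokedPentagon G p q) (hG : G.IsSRGWith n k 0 1) (i j : Fin 5) :
    G.Adj (q i) (p j) ↔ j = i := by
  have hp := h.adj_add_one
  have hp' := pentagon_adj_sub_one hp
  have hpq := h.adj_spoke i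
  have hinj := pentagon_injective hG hp
  refine ⟨fun hij => ?_, fun hij => hij ▸ hpq.symm⟩
  obtain hji | rfl | rfl | rfl | rfl :
      j = i ∨ j = i + 1 ∨ j = i - 1 ∨ j = i + 1 + 1 ∨ j = i - 1 - 1 := by omega
  · exact hji
  · exact (not_adj_of_isSRGWith_zero hG hpq.symm (hp i) hij).elim
  · exact (not_adj_of_isSRGWith_zero hG hpq.symm (hp' i) hij).elim
  · exact (h.spoke_ne_add_one i <|
      eq_of_isSRGWith_zero_one hG (hinj.ne (by omega)) hpq hij (hp i) (hp _)).elim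
  · exact (h.spoke_ne_sub_one i <|
      eq_of_isSRGWith_zero_one hG (hinj.ne (by omega)) hpq hij (hp' i) (hp' _)).elim

theorem ne_spoke (h : IsSpokedPentagon G p q) (hG : G.IsSRGWith n k 0 m) (i j : Fin 5) :
    p i ≠ q j := by
  intro hij
  have hadj := h.adj_spoke j
  rw [← hij, pentagon_adj_iff hG h.adj_add_one] at hadj
  rcases hadj with rfl | rfl
  exacts [h.spoke_ne_add_one j hij.symm, h.spoke_ne_sub_one j hij.symm]

theorem spoke_injective (h : IsSpokedPentagon G p q) (hG : G.IsSRGWith n k 0 1) :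
    Function.Injective q := fun i j hij =>
  (h.spoke_adj_iff hG j i).1 (hij ▸ (h.adj_spoke i).symm)

theorem eq_of_adj (h : IsSpokedPentagon G p q) (hG : G.IsSRGWith n 3 0 m) {i : Fin 5}
    (hw : G.Adj (p i) w) : w = q i ∨ w = p (i + 1) ∨ w = p (i - 1) := by
  classical
  have hne : p (i + 1) ≠ p (i - 1) := (pentagon_injective hG h.adj_add_one).ne (by omega)
  have hneighbors : {q i, p (i + 1), p (i - 1)} = G.neighborFinset (p i) := by
    refine Finset.eq_of_subset_of_card_le ?_ ?_
    · simp [Finset.insert_subset_iff, h.adj_spoke, h.adj_add_one,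
        pentagon_adj_sub_one h.adj_add_one i]
    · rw [G.card_neighborFinset_eq_degree, hG.regular,
        Finset.card_eq_three.2 ⟨_, _, _, h.spoke_ne_add_one i, h.spoke_ne_sub_one i, hne, rfl⟩]
  simpa using hneighbors.ge ((G.mem_neighborFinset _ _).2 hw)

theorem spoke_adj_add_two (h : IsSpokedPentagon G p q) (hG : G.IsSRGWith n 3 0 1) (i : Fin 5) :
    G.Adj (q i) (q (i + 2)) := by
  have hnadj {j : Fin 5} (hj : j ≠ i) : ¬G.Adj (q i) (p j) := mt (h.spoke_adj_iff hG i j).1 hj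
  obtain ⟨w, hqw, hwp⟩ := exists_adj_adj_of_isSRGWith_one hG (h.ne_spoke hG (i + 2) i).symm
    (hnadj (by omega))
  rcases h.eq_of_adj hG hwp.symm with rfl | rfl | rfl
  · exact hqw
  · exact (hnadj (by omega) hqw).elim
  · exact (hnadj (by omega) hqw).elim

end IsSpokedPentagon

end Pentagon

/-- The Petersen graph, drawn as an outer pentagon `inl`, an inner pentagram `inr` and the five
spokes between them. -/
def petersenGraph : SimpleGraph (Fin 5 ⊕ Fin 5) :=
  SimpleGraph.fromRel fun
    | .inl i, .inl j => j = i + 1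
    | .inl i, .inr j => i = j
    | .inr i, .inr j => j = i + 2
    | .inr _, .inl _ => False

instance : DecidableRel petersenGraph.Adj := by
  rintro (i | i) (j | j) <;> unfold petersenGraph <;> simp only [SimpleGraph.fromRel_adj] <;>
    infer_instance

theorem petersenGraph_isRegularOfDegree : petersenGraph.IsRegularOfDegree 3 := by
  unfold SimpleGraph.IsRegularOfDegree
  decide +kernel

theorem nonempty_petersenGraph_iso (hG : G.IsSRGWith 10 3 0 1) :
    Nonempty (petersenGraph ≃g G) := by
  obtain ⟨p, q, h⟩ := exists_isSpokedPentagon hG (by norm_num) (by norm_num)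
  have hadj : petersenGraph ≤ G.comap (Sum.elim p q) := by
    unfold petersenGraph
    rintro (i | i) (j | j) ⟨-, hij⟩
    · rcases hij with rfl | rfl
      exacts [h.adj_add_one i, (h.adj_add_one j).symm]
    · obtain rfl := hij.resolve_right id
      exact h.adj_spoke i
    · obtain rfl := hij.resolve_left id
      exact (h.adj_spoke j).symm
    · rcases hij with rfl | rfl
      exacts [h.spoke_adj_add_two hG i, (h.spoke_adj_add_two hG j).symm]
  have hinj : Function.Injective (Sum.elim p q) :=
    (pentagon_injective hG h.adj_add_one).sumElim (h.spoke_injective hG) (h.ne_spoke hG)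
  have hbij : Function.Bijective (Sum.elim p q) :=
    (Fintype.bijective_iff_injective_and_card _).2 ⟨hinj, by simp [hG.card]⟩
  exact ⟨⟨Equiv.ofBijective _ hbij, adj_iff_of_injective_of_isRegularOfDegree
    petersenGraph_isRegularOfDegree hG.regular hinj (fun _ _ h => hadj h) _ _⟩⟩

end MooreGraph

section NormalForm

/-- The letter `0` followed by row `a` of the symmetric conference matrix with entries `-1` at the
edges of the Petersen graph. -/
def petersenWord (a : Fin 5 ⊕ Fin 5) : Fin 11 → SignType :=
  Fin.cons 0 fun j : Fin 10 =>
    if a = finSumFinEquiv.symm j then 0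
    else if petersenGraph.Adj a (finSumFinEquiv.symm j) then -1 else 1

variable {r : Fin 10 → Fin 11 → SignType}

theorem exists_perm_isConferenceMatrix_of_words (hr : ∀ k, HasProfile (r k) 6 2 3)
    (hr0 : ∀ k, r k 0 = 0) (horth : Pairwise fun k l => signDot (r k) (r l) = 0) :
    ∃ e : Equiv.Perm (Fin 10),
      IsConferenceMatrix (Matrix.of fun k j : Fin 10 => (r (e k) j.succ : ℤ)) := by
  refine exists_perm_isConferenceMatrix (W := .of fun k j : Fin 10 => (r k j.succ : ℤ))
    (by decide) (fun k => ?_) (fun k j => ?_) (fun k l hkl => ?_)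
  · have hcard := (hr k).2.1
    rw [Fin.card_filter_univ_succ, if_pos (hr0 k)] at hcard
    obtain ⟨j, hj⟩ := Finset.card_eq_one.1 (Nat.succ.inj hcard)
    exact ⟨j, fun j' => (map_eq_zero (SignType.castHom (α := ℤ))).trans <| by
      simpa using Finset.ext_iff.1 hj j'⟩
  · rw [Matrix.of_apply]
    cases r k j.succ <;> simp
  · simpa [signDot, Fin.sum_univ_succ _, hr0] using horth hkl

theorem exists_comp_perm_eq_petersenWord (hr : ∀ k, HasProfile (r k) 6 2 3)
    (hr0 : ∀ k, r k 0 = 0) (horth : Pairwise fun k l => signDot (r k) (r l) = 0) :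
    ∃ (e : Fin 5 ⊕ Fin 5 ≃ Fin 10) (σ : Equiv.Perm (Fin 11)),
      ∀ a, r (e a) ∘ σ = petersenWord a := by
  obtain ⟨e, hC⟩ := exists_perm_isConferenceMatrix_of_words hr hr0 horth
  set C : Matrix (Fin 10) (Fin 10) ℤ :=
    .of fun k j => (r (e k) j.succ : ℤ)
  have hsum (k : Fin 10) : ∑ j, C k j = 3 := by
    have h := (hr (e k)).sum_eq
    rw [Fin.sum_univ_succ, hr0] at h
    simpa [C] using h
  obtain ⟨φ⟩ := nonempty_petersenGraph_iso
    (hC.isSRGWith_negGraph hsum (k := 3) (l := 0) (by simp) (by simp))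
  have hsymm := hC.apply_comm hsum (by norm_num)
  refine ⟨φ.toEquiv.trans e,
    Equiv.Perm.decomposeFin.symm (0, finSumFinEquiv.symm.trans φ.toEquiv), fun a => ?_⟩
  have hrow (i j : Fin 10) : r (e i) j.succ =
      if i = j then 0 else if (negGraph C).Adj i j then -1 else 1 := by
    have hentry : (r (e i) j.succ : ℤ) = C i j := rfl
    rw [hC.apply_eq_ite hsymm] at hentry
    revert hentry
    split_ifs <;> cases r (e i) j.succ <;> simp
  funext j
  cases j using Fin.cases with
  | zero => simp [petersenWord, hr0]
  | succ j =>
    simp only [Function.comp_apply, Equiv.Perm.decomposeFin_symm_apply_succ, petersenWord,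
      Fin.cons_succ, Equiv.swap_self, Equiv.refl_apply, Equiv.trans_apply, hrow,
      RelIso.coe_fn_toEquiv, φ.injective.eq_iff, φ.map_adj_iff]

end NormalForm

section Clique

variable {x : Fin 11 → EuclideanSpace ℝ (Fin 10)} {C : Set (EuclideanSpace ℝ (Fin 10))}

theorem IsClique10.exists_words (hx : IsRegularSimplex x) (hC : IsClique10 x C) :
    ∃ r : Fin 10 → Fin 11 → SignType, (∀ k, HasProfile (r k) 6 2 3) ∧ (∀ k, r k 0 = 0) ∧
      (Pairwise fun k l => signDot (r k) (r l) = 0) ∧ C = Set.range fun k => signVec x (r k) := by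
  obtain ⟨hY, hcard, hadj⟩ := hC
  have : Finite C := Set.finite_of_ncard_ne_zero (by norm_num [hcard])
  let e : Fin 10 ≃ C := (Finite.equivFinOfCardEq hcard).symm
  choose r hr hr0 hre using fun k => exists_signVec_eq_of_mem_Y1set hx (hY (e k).2)
  refine ⟨r, hr, hr0, fun k l hkl => ?_, ?_⟩
  · have hne : (e k : EuclideanSpace ℝ (Fin 10)) ≠ e l :=
      Subtype.val_injective.ne (e.injective.ne hkl)
    have hinner := hadj _ (e k).2 _ (e l).2 hne
    rwa [← hre, ← hre, inner_signVec_eq_iff hx (hr k) (hr l) (n := 0) (by norm_num [α2])] at hinner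
  · simp only [hre]
    exact (e.surjective.range_comp Subtype.val).trans Subtype.range_coe |>.symm

theorem IsClique10.exists_simplex_eq_range_petersenWord (hx : IsRegularSimplex x)
    (hC : IsClique10 x C) : ∃ y, IsRegularSimplex y ∧ (∀ a, HasProfile (petersenWord a) 6 2 3) ∧
      Zset y C = Zset x C ∧ C = Set.range fun a => signVec y (petersenWord a) := by
  obtain ⟨r, hr, hr0, horth, rfl⟩ := hC.exists_words hx
  obtain ⟨e, σ, hσ⟩ := exists_comp_perm_eq_petersenWord hr hr0 horth
  refine ⟨x ∘ σ, hx.comp_perm σ, fun a => hσ a ▸ (hr (e a)).comp_equiv σ, Zset_comp_perm σ _, ?_⟩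
  simp only [← hσ, signVec_comp_perm]
  exact (e.surjective.range_comp fun k => signVec x (r k)).symm

end Clique

section Enumeration

/-- The lists of signs of length `n` with `p` letters `1`, `z` letters `0` and `m` letters `-1`. -/
def signWords : ℕ → ℕ → ℕ → ℕ → List (List SignType)
  | 0, 0, 0, 0 => [[]]
  | 0, _, _, _ => []
  | n + 1, p, z, m =>
    (match p with | 0 => [] | p + 1 => (signWords n p z m).map (1 :: ·)) ++
    (match z with | 0 => [] | z + 1 => (signWords n p z m).map (0 :: ·)) ++
    (match m with | 0 => [] | m + 1 => (signWords n p z m).map (-1 :: ·))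

/-- The standard inner product of two lists of signs, in a form that evaluates quickly. -/
def listDot : List SignType → List SignType → ℤ
  | a :: l, b :: m => (a * b : SignType) + listDot l m
  | _, _ => 0

theorem listDot_ofFn {n : ℕ} (v w : Fin n → SignType) :
    listDot (List.ofFn v) (List.ofFn w) = signDot v w := by
  induction n with
  | zero => simp [listDot, signDot]
  | succ n ih => simp [List.ofFn_succ, listDot, ih, signDot, Fin.sum_univ_succ]

theorem ofFn_mem_signWords_iff {n p z m : ℕ} {v : Fin n → SignType} :
    List.ofFn v ∈ signWords n p z m ↔ HasProfile v p z m := by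
  induction n generalizing p z m with
  | zero => cases p <;> cases z <;> cases m <;> simp [signWords, HasProfile]
  | succ n ih =>
    simp only [HasProfile, Fin.card_filter_univ_succ, List.ofFn_succ] at ih ⊢
    cases p <;> cases z <;> cases m <;> cases v 0 <;> simp [signWords, ih]

theorem length_of_mem_signWords {n p z m : ℕ} {l : List SignType} (hl : l ∈ signWords n p z m) :
    l.length = n := by
  induction n generalizing l p z m with
  | zero => cases p <;> cases z <;> cases m <;> simp_all [signWords]
  | succ n ih => cases p <;> cases z <;> cases m <;> grind [signWords]

theorem nodup_signWords (n p z m : ℕ) : (signWords n p z m).Nodup := by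
  induction n generalizing p z m with
  | zero => cases p <;> cases z <;> cases m <;> simp [signWords]
  | succ n ih =>
    cases p <;> cases z <;> cases m <;>
      simp [signWords, List.nodup_append, List.nodup_map_iff, ih, or_imp, forall_and]

theorem ncard_setOf_ofFn_mem {α : Type*} {n : ℕ} {L : List (List α)} (hL : L.Nodup)
    (hlength : ∀ l ∈ L, l.length = n) : {v : Fin n → α | List.ofFn v ∈ L}.ncard = L.length := by
  classical
  rw [← Set.ncard_image_of_injective _ List.ofFn_injective, ← List.toFinset_card_of_nodup hL,
    ← Set.ncard_coe_finset]
  congr 1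
  ext l
  simp only [Set.mem_image, Set.mem_ofPred_eq, Finset.mem_coe, List.mem_toFinset]
  constructor
  · rintro ⟨v, hv, rfl⟩
    exact hv
  · intro hl
    obtain rfl := hlength l hl
    exact ⟨l.get, by rwa [List.ofFn_get], List.ofFn_get l⟩

theorem listDot_comm : ∀ l m : List SignType, listDot l m = listDot m l
  | [], [] | [], _ :: _ | _ :: _, [] => rfl
  | a :: l, b :: m => by rw [listDot, listDot, listDot_comm l m, mul_comm a b]

end Enumeration

section Compatible

/-- The words encoding the vectors of `Z` when the clique is encoded by `petersenWord`. -/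
def compatibleWords : Set (Fin 11 → SignType) :=
  {v | HasProfile v 6 2 3 ∧ ∀ a, signDot v (petersenWord a) ∈ admissibleDots}

/-- An explicit enumeration of `compatibleWords`. -/
def compatibleLists : List (List SignType) :=
  (signWords 11 6 2 3).filter fun l =>
    ∀ a, listDot l (List.ofFn (petersenWord a)) ∈ admissibleDots

/-- A member of `compatibleWords`, chosen as representative of its class modulo `3`. -/
def baseWord : Fin 11 → SignType :=
  ![1, 1, 1, 1, 1, -1, -1, 0, 0, -1, 1]

theorem ofFn_mem_compatibleLists_iff {v : Fin 11 → SignType} :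
    List.ofFn v ∈ compatibleLists ↔ v ∈ compatibleWords := by
  simp only [compatibleLists, List.mem_filter, ofFn_mem_signWords_iff, listDot_ofFn,
    decide_eq_true_eq, compatibleWords, Set.mem_ofPred_eq]

theorem compatibleLists_split :
    (compatibleLists.filter fun l => 3 ∣ listDot l (List.ofFn baseWord)).length = 45 ∧
      (compatibleLists.filter fun l => ¬3 ∣ listDot l (List.ofFn baseWord)).length = 45 ∧
      compatibleLists.Pairwise fun l m => listDot l m ∈ admissibleDots ↔
        (3 ∣ listDot l (List.ofFn baseWord) ↔ 3 ∣ listDot m (List.ofFn baseWord)) := by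
  decide +kernel

/-- The words whose encoded vectors lie in the class of the vector encoded by `baseWord`. -/
def baseClass : Set (Fin 11 → SignType) :=
  {v | 3 ∣ signDot v baseWord}

theorem ncard_sep_compatibleWords (p : List SignType → Bool) :
    {v ∈ compatibleWords | p (List.ofFn v)}.ncard = (compatibleLists.filter p).length := by
  have hnodup : (compatibleLists.filter p).Nodup := ((nodup_signWords 11 6 2 3).filter _).filter p
  have hlength : ∀ l ∈ compatibleLists.filter p, l.length = 11 := fun l hl =>
    length_of_mem_signWords (List.mem_of_mem_filter (List.mem_of_mem_filter hl))
  rw [← ncard_setOf_ofFn_mem hnodup hlength]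
  simp only [List.mem_filter, ofFn_mem_compatibleLists_iff]

theorem ncard_compatibleWords_inter_baseClass : (compatibleWords ∩ baseClass).ncard = 45 := by
  simpa only [listDot_ofFn, decide_eq_true_eq, baseClass, Set.inter_def, Set.mem_ofPred_eq] using
    (ncard_sep_compatibleWords _).trans compatibleLists_split.1

theorem ncard_compatibleWords_sdiff_baseClass : (compatibleWords \ baseClass).ncard = 45 := by
  simpa only [listDot_ofFn, decide_eq_true_eq, baseClass, Set.sdiff_eq, Set.inter_def,
    Set.mem_compl_iff, Set.mem_ofPred_eq] using
    (ncard_sep_compatibleWords _).trans compatibleLists_split.2.1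

theorem signDot_mem_admissibleDots_iff {v w : Fin 11 → SignType} (hv : v ∈ compatibleWords)
    (hw : w ∈ compatibleWords) (hvw : v ≠ w) :
    signDot v w ∈ admissibleDots ↔ (v ∈ baseClass ↔ w ∈ baseClass) := by
  have : Std.Symm fun l m => listDot l m ∈ admissibleDots ↔
      (3 ∣ listDot l (List.ofFn baseWord) ↔ 3 ∣ listDot m (List.ofFn baseWord)) :=
    ⟨fun l m h => by rwa [listDot_comm m l, iff_comm (a := 3 ∣ listDot m _)]⟩
  have h := compatibleLists_split.2.2.forall (ofFn_mem_compatibleLists_iff.2 hv)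
    (ofFn_mem_compatibleLists_iff.2 hw) (List.ofFn_injective.ne hvw)
  simpa only [listDot_ofFn, baseClass, Set.mem_ofPred_eq] using h

end Compatible

/-- The set `Z` splits into two disjoint 45-element parts `Z1`, `Z2` such that
inner products of distinct vectors within a part lie in `{α1, α2, α3}`, while
inner products across the two parts do not. -/
theorem Zset_splits (x : Fin 11 → EuclideanSpace ℝ (Fin 10))
    (hx : IsRegularSimplex x)
    (C2 : Set (EuclideanSpace ℝ (Fin 10))) (hC2 : IsClique10 x C2) :
    ∃ Z1 Z2 : Set (EuclideanSpace ℝ (Fin 10)),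
      Z1 ∪ Z2 = Zset x C2 ∧ Disjoint Z1 Z2 ∧
      Z1.ncard = 45 ∧ Z2.ncard = 45 ∧
      (∀ u ∈ Z1, ∀ v ∈ Z1, u ≠ v → ⟪u, v⟫ ∈ ({α1, α2, α3} : Set ℝ)) ∧
      (∀ u ∈ Z2, ∀ v ∈ Z2, u ≠ v → ⟪u, v⟫ ∈ ({α1, α2, α3} : Set ℝ)) ∧
      (∀ z1 ∈ Z1, ∀ z2 ∈ Z2, ⟪z1, z2⟫ ∉ ({α1, α2, α3} : Set ℝ)) := by
  obtain ⟨y, hy, hrow, hZ, hC⟩ := hC2.exists_simplex_eq_range_petersenWord hx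
  rw [← hZ, hC, Zset_range_signVec hy hrow, ← compatibleWords]
  have hinj : Set.InjOn (signVec y) compatibleWords := (signVec_injOn hy).mono fun v hv => hv.1
  have hangle {v w : Fin 11 → SignType} (hv : v ∈ compatibleWords) (hw : w ∈ compatibleWords)
      (hvw : v ≠ w) : ⟪signVec y v, signVec y w⟫ ∈ ({α1, α2, α3} : Set ℝ) ↔
        (v ∈ baseClass ↔ w ∈ baseClass) :=
    (inner_signVec_mem_angles_iff hy hv.1 hw.1).trans (signDot_mem_admissibleDots_iff hv hw hvw)
  refine ⟨signVec y '' (compatibleWords ∩ baseClass), signVec y '' (compatibleWords \ baseClass),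
    ?_, ?_, ?_, ?_, ?_, ?_, ?_⟩
  · rw [← Set.image_union, Set.inter_union_sdiff]
  · exact (Set.disjoint_sdiff_inter.symm).image hinj Set.inter_subset_left Set.sdiff_subset
  · rw [(hinj.mono Set.inter_subset_left).ncard_image, ncard_compatibleWords_inter_baseClass]
  · rw [(hinj.mono Set.sdiff_subset).ncard_image, ncard_compatibleWords_sdiff_baseClass]
  · rintro _ ⟨v, ⟨hv, hv'⟩, rfl⟩ _ ⟨w, ⟨hw, hw'⟩, rfl⟩ hne
    exact (hangle hv hw (ne_of_apply_ne _ hne)).2 (iff_of_true hv' hw')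
  · rintro _ ⟨v, ⟨hv, hv'⟩, rfl⟩ _ ⟨w, ⟨hw, hw'⟩, rfl⟩ hne
    exact (hangle hv hw (ne_of_apply_ne _ hne)).2 (iff_of_false hv' hw')
  · rintro _ ⟨v, ⟨hv, hv'⟩, rfl⟩ _ ⟨w, ⟨hw, hw'⟩, rfl⟩ h
    exact hw' (((hangle hv hw (ne_of_mem_of_not_mem hv' hw')).1 h).1 hv')
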